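/- For every integer k ≥ 1 and every real h ≥ 0, f(N_k, h) > e^{−0.01 h} ∫₁^{1.01} P_k(s) ds. -/

import Mathlib

open MeasureTheory Real

/-- The prime zeta function `P(s) = ∑_p p^{-s}` (sum over all primes). -/
noncomputable def primeZeta (s : ℝ) : ℝ := ∑' p : Nat.Primes, (p.1 : ℝ) ^ (-s)

/-- The set of `k`-almost primes: positive integers with exactly `k` prime
factors counted with multiplicity. -/
def almostPrimes (k : ℕ) : Set ℕ := {n | 0 < n ∧ n.primeFactorsList.length = k}

/-- `P_k(s) = ∑_{n ∈ N_k} n^{-s}`; note `P_0(s) = 1` since `N_0 = {1}`. -/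
noncomputable def Pk (k : ℕ) (s : ℝ) : ℝ := ∑' n : almostPrimes k, (n.1 : ℝ) ^ (-s)

/-- Translated sum `f(A, h) = ∑_{a ∈ A} 1/(a (log a + h))`. -/
noncomputable def transSum (A : Set ℕ) (h : ℝ) : ℝ :=
  ∑' a : A, 1 / ((a.1 : ℝ) * (Real.log a.1 + h))

lemma aux_two_le {k : ℕ} (hk : 1 ≤ k) {n : ℕ} (hn : n ∈ almostPrimes k) : 2 ≤ n := by
  obtain ⟨h0, h1⟩ := hn
  by_contra hlt
  have : n = 1 := by omega
  subst this
  simp at h1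
  omega

lemma aux_card_div (m : ℕ) (hm : m ≠ 0) :
    m.divisors.card ≤ 2 ^ m.primeFactorsList.length := by
  classical
  have hsub : m.divisors ⊆ (m.primeFactorsList.sublists.map List.prod).toFinset := by
    intro a ha
    have hd := Nat.dvd_of_mem_divisors ha
    have ha0 : a ≠ 0 := by rintro rfl; simp at ha
    rw [List.mem_toFinset, List.mem_map]
    refine ⟨a.primeFactorsList, ?_, Nat.prod_primeFactorsList ha0⟩
    rw [List.mem_sublists]
    exact Nat.primeFactorsList_sublist_of_dvd hd hm
  calc m.divisors.card ≤ _ := Finset.card_le_card hsub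
    _ ≤ _ := List.toFinset_card_le _
    _ = _ := by simp

lemma aux_step (n : ℕ) (hn : 1 ≤ n) (t : ℝ) (ht : 0 < t) :
    t * ((n + 1 : ℕ) : ℝ) ^ (-(1 + t)) ≤ (n : ℝ) ^ (-t) - ((n + 1 : ℕ) : ℝ) ^ (-t) := by
  have hn0 : (0 : ℝ) < n := by exact_mod_cast hn
  push_cast
  have h1 : (0 : ℝ) < n + 1 := by positivity
  have e1 : ((n : ℝ) + 1) ^ (-(1 + t)) = (n + 1 : ℝ) ^ (-t) * (1 / (n + 1)) := by
    rw [show -(1 + t) = -t - 1 by ring, Real.rpow_sub_one h1.ne']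
    ring
  have e2 : (n : ℝ) ^ (-t) = (n + 1 : ℝ) ^ (-t) * ((n + 1) / n : ℝ) ^ t := by
    rw [Real.div_rpow h1.le hn0.le, Real.rpow_neg hn0.le, Real.rpow_neg h1.le]
    have := (Real.rpow_pos_of_pos h1 t).ne'
    field_simp
  have hq : (0 : ℝ) < (n + 1) / n := by positivity
  have h2 : 1 + t * (1 / (n + 1)) ≤ ((n + 1) / n : ℝ) ^ t := by
    rw [Real.rpow_def_of_pos hq]
    have h3 := Real.one_sub_inv_le_log_of_pos hq
    have h4 : 1 - ((n + 1) / n : ℝ)⁻¹ = 1 / (n + 1) := by field_simp; ring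
    rw [h4] at h3
    have h5 := Real.add_one_le_exp (Real.log ((n + 1) / n : ℝ) * t)
    nlinarith
  have hp := Real.rpow_pos_of_pos h1 (-t)
  rw [e1, e2]
  nlinarith

lemma aux_zeta_range (t : ℝ) (ht : 0 < t) (N : ℕ) (hN : 1 ≤ N) :
    t * ∑ m ∈ Finset.Icc 1 N, (m : ℝ) ^ (-(1 + t)) ≤ t + 1 - (N : ℝ) ^ (-t) := by
  induction N, hN using Nat.le_induction with
  | base => simp
  | succ n hn ih =>
    rw [Finset.sum_Icc_succ_top (by omega), mul_add]
    have := aux_step n hn t ht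
    linarith

lemma aux_zeta (t : ℝ) (ht : 0 < t) (ht1 : t ≤ 1) (G : Finset ℕ) (hG : ∀ m ∈ G, 1 ≤ m) :
    ∑ m ∈ G, (m : ℝ) ^ (-(1 + t)) ≤ 2 / t := by
  have hsub : G ⊆ Finset.Icc 1 (G.sup id + 1) := by
    intro m hm
    have : m ≤ G.sup id := Finset.le_sup (f := id) hm
    have := hG m hm
    simp; omega
  have h1 := Finset.sum_le_sum_of_subset_of_nonneg (f := fun m : ℕ => (m : ℝ) ^ (-(1 + t))) hsub
    (fun i _ _ => by positivity)
  have h2 := aux_zeta_range t ht (G.sup id + 1) (by omega)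
  have h3 : (0 : ℝ) ≤ ((G.sup id + 1 : ℕ) : ℝ) ^ (-t) := by positivity
  rw [le_div_iff₀ ht]
  nlinarith

lemma aux_sq (k : ℕ) (F : Finset ℕ) (hF : ∀ n ∈ F, n ∈ almostPrimes k)
    (t : ℝ) (ht : 0 < t) (ht1 : t ≤ 1) :
    (∑ n ∈ F, (n : ℝ) ^ (-(1 + t))) ^ 2 ≤ 4 ^ k * (2 / t) := by
  classical
  set G := (F ×ˢ F).image (fun p : ℕ × ℕ => p.1 * p.2) with hG
  have hGm : ∀ m ∈ G, 1 ≤ m ∧ m.primeFactorsList.length = 2 * k := by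
    intro m hm
    obtain ⟨⟨a, b⟩, hp, rfl⟩ := Finset.mem_image.1 hm
    rw [Finset.mem_product] at hp
    obtain ⟨ha, ha'⟩ := hF _ hp.1
    obtain ⟨hb, hb'⟩ := hF _ hp.2
    refine ⟨Nat.mul_pos ha hb, ?_⟩
    have := (Nat.perm_primeFactorsList_mul ha.ne' hb.ne').length_eq
    simp only [List.length_append] at this
    simp only at ha' hb' ⊢
    omega
  have h1 : (∑ n ∈ F, (n : ℝ) ^ (-(1 + t))) ^ 2
      = ∑ p ∈ F ×ˢ F, ((p.1 * p.2 : ℕ) : ℝ) ^ (-(1 + t)) := by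
    rw [sq, Finset.sum_mul_sum, Finset.sum_product]
    refine Finset.sum_congr rfl fun a _ => Finset.sum_congr rfl fun b _ => ?_
    push_cast
    rw [Real.mul_rpow (by positivity) (by positivity)]
  rw [h1, ← Finset.sum_fiberwise_of_maps_to (t := G) (g := fun p : ℕ × ℕ => p.1 * p.2)
    (fun p hp => Finset.mem_image_of_mem _ hp)]
  calc _ ≤ ∑ m ∈ G, (4 : ℝ) ^ k * (m : ℝ) ^ (-(1 + t)) := by
        refine Finset.sum_le_sum fun m hm => ?_
        obtain ⟨hm1, hm2⟩ := hGm m hm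
        have hc : ((F ×ˢ F).filter (fun p : ℕ × ℕ => p.1 * p.2 = m)).card ≤ 4 ^ k := by
          calc _ ≤ m.divisorsAntidiagonal.card := by
                refine Finset.card_le_card fun p hp => ?_
                rw [Finset.mem_filter] at hp
                rw [Nat.mem_divisorsAntidiagonal]
                exact ⟨hp.2, by omega⟩
            _ = m.divisors.card := by
                rw [← Nat.map_div_right_divisors, Finset.card_map]
            _ ≤ _ := aux_card_div m (by omega)
            _ = 4 ^ k := by rw [hm2, pow_mul]; norm_num
        have hc' : (((F ×ˢ F).filter (fun p : ℕ × ℕ => p.1 * p.2 = m)).card : ℝ) ≤ 4 ^ k := by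
          exact_mod_cast hc
        rw [Finset.sum_congr rfl (g := fun _ => (m : ℝ) ^ (-(1 + t)))
          (fun p hp => by rw [(Finset.mem_filter.1 hp).2])]
        rw [Finset.sum_const, nsmul_eq_mul]
        gcongr
    _ = 4 ^ k * ∑ m ∈ G, (m : ℝ) ^ (-(1 + t)) := by rw [Finset.mul_sum]
    _ ≤ _ := by
        gcongr
        exact aux_zeta t ht ht1 G fun m hm => (hGm m hm).1

lemma aux_int (n : ℕ) (hn : 2 ≤ n) :
    ∫ s in (1:ℝ)..1.01, (n : ℝ) ^ (-s)
      = (1 - Real.exp (-(0.01 * Real.log n))) / (n * Real.log n) := by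
  have hn0 : (0 : ℝ) < n := by positivity
  have hL : 0 < Real.log n := Real.log_pos (by exact_mod_cast hn)
  have hd : ∀ s ∈ Set.uIcc (1:ℝ) 1.01,
      HasDerivAt (fun s : ℝ => -(n : ℝ) ^ (-s) / Real.log n) ((n : ℝ) ^ (-s)) s := by
    intro s _
    have h := (((hasDerivAt_id s).neg.const_rpow hn0).neg).div_const (Real.log n)
    refine h.congr_deriv ?_
    simp only [Pi.neg_apply, id]
    field_simp
  rw [intervalIntegral.integral_eq_sub_of_hasDerivAt hd]
  · have e1 : (n : ℝ) ^ (-(1.01:ℝ)) = (n : ℝ)⁻¹ * Real.exp (-(0.01 * Real.log n)) := by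
      rw [show -(1.01:ℝ) = -1 + -0.01 by norm_num, Real.rpow_add hn0, Real.rpow_neg_one,
        Real.rpow_def_of_pos hn0 (-0.01)]
      congr 2; ring
    rw [e1, Real.rpow_neg_one]
    field_simp
    ring
  · apply Continuous.intervalIntegrable
    exact Continuous.rpow continuous_const continuous_neg (fun s => Or.inl hn0.ne')

lemma aux_intble (n : ℕ) (hn : 2 ≤ n) (a b : ℝ) :
    IntervalIntegrable (fun s : ℝ => (n : ℝ) ^ (-s)) volume a b := by
  have hn0 : (0 : ℝ) < n := by positivity
  apply Continuous.intervalIntegrable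
  exact Continuous.rpow continuous_const continuous_neg (fun s => Or.inl hn0.ne')

lemma aux_summable_int (k : ℕ) (hk : 1 ≤ k) :
    Summable (fun n : almostPrimes k => ∫ s in (1:ℝ)..1.01, (n.1 : ℝ) ^ (-s)) := by
  classical
  set g : ℝ → ℝ := fun s => √(4 ^ k * 2) * (s - 1) ^ (-(1/2) : ℝ) with hg
  have hgi : IntervalIntegrable g volume 1 1.01 := by
    apply IntervalIntegrable.const_mul
    have h0 : IntervalIntegrable (fun x : ℝ => x ^ (-(1/2) : ℝ)) volume 0 0.01 :=
      intervalIntegral.intervalIntegrable_rpow' (by norm_num)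
    have := h0.comp_sub_right 1
    convert this using 1 <;> norm_num
  refine summable_of_sum_le (c := ∫ s in (1:ℝ)..1.01, g s) ?_ ?_
  · intro n
    exact intervalIntegral.integral_nonneg (by norm_num) (fun s _ => by positivity)
  · intro u
    rw [← intervalIntegral.integral_finsetSum
      (fun i _ => aux_intble _ (aux_two_le hk i.2) _ _)]
    refine intervalIntegral.integral_mono_on_of_le_Ioo (by norm_num) ?_ hgi ?_
    · apply Continuous.intervalIntegrable
      refine continuous_finset_sum _ fun i _ => ?_
      have hn0 : (i.1 : ℝ) ≠ 0 := by
        have := aux_two_le hk i.2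
        exact_mod_cast (by omega : i.1 ≠ 0)
      exact Continuous.rpow continuous_const continuous_neg (fun s => Or.inl hn0)
    · intro s hs
      have ht : 0 < s - 1 := by linarith [hs.1]
      have ht1 : s - 1 ≤ 1 := by have := hs.2; norm_num at this; linarith
      have h1 := aux_sq k (u.map (Function.Embedding.subtype _))
        (by intro n hn; obtain ⟨x, _, rfl⟩ := Finset.mem_map.1 hn; exact x.2) (s - 1) ht ht1
      rw [Finset.sum_map] at h1
      simp only [Function.Embedding.subtype_apply, add_sub_cancel] at h1
      have h2 := Real.le_sqrt_of_sq_le h1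
      refine h2.trans (le_of_eq ?_)
      rw [hg]
      simp only
      rw [mul_div_assoc', Real.sqrt_div (by positivity), Real.rpow_neg ht.le, ← Real.sqrt_eq_rpow]
      rfl

lemma aux_summable_f (k : ℕ) (hk : 1 ≤ k) (h : ℝ) (hh : 0 ≤ h) :
    Summable (fun n : almostPrimes k => 1 / ((n.1 : ℝ) * (Real.log n.1 + h))) := by
  set c := 1 - Real.exp (-(0.01 * Real.log 2)) with hc
  have hl2 : 0 < Real.log 2 := Real.log_pos (by norm_num)
  have hc0 : 0 < c := by
    rw [hc, sub_pos, Real.exp_lt_one_iff]; linarith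
  refine Summable.of_nonneg_of_le ?_ ?_ ((aux_summable_int k hk).mul_left c⁻¹)
  · intro n
    have := Real.log_natCast_nonneg n.1
    positivity
  · intro n
    have hn := aux_two_le hk n.2
    have hnR : (2 : ℝ) ≤ n.1 := by exact_mod_cast hn
    have hL : Real.log 2 ≤ Real.log n.1 := Real.log_le_log (by norm_num) hnR
    rw [aux_int _ hn]
    have hL0 : 0 < Real.log n.1 := by linarith
    have h1 : c ≤ 1 - Real.exp (-(0.01 * Real.log n.1)) := by
      rw [hc]; gcongr
    calc 1 / ((n.1 : ℝ) * (Real.log n.1 + h)) ≤ 1 / ((n.1 : ℝ) * Real.log n.1) := by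
          gcongr; linarith
      _ = c⁻¹ * (c / ((n.1 : ℝ) * Real.log n.1)) := by field_simp
      _ ≤ _ := by gcongr

lemma aux_term (n : ℕ) (hn : 2 ≤ n) (h : ℝ) (hh : 0 ≤ h) :
    Real.exp (-0.01 * h) * ∫ s in (1:ℝ)..1.01, (n : ℝ) ^ (-s)
      < 1 / ((n : ℝ) * (Real.log n + h)) := by
  have hn0 : (0 : ℝ) < n := by positivity
  have hL : 0 < Real.log n := Real.log_pos (by exact_mod_cast hn)
  rw [aux_int n hn]
  generalize Real.log n = L at *
  set E := Real.exp (-(0.01 * L)) with hE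
  have hE0 : 0 < E := Real.exp_pos _
  have hE1 : 1 - E ≤ 0.01 * L := by
    have := Real.add_one_le_exp (-(0.01 * L)); linarith
  have h2 : 0.01 * h + 1 ≤ Real.exp (0.01 * h) := Real.add_one_le_exp _
  rw [show -0.01 * h = -(0.01 * h) by ring, Real.exp_neg, inv_mul_eq_div, div_div,
    div_lt_div_iff₀ (by positivity) (by positivity)]
  have key : (1 - E) * (L + h) < L * Real.exp (0.01 * h) := by
    nlinarith [mul_le_mul_of_nonneg_left h2 hL.le, mul_le_mul_of_nonneg_right hE1 hh,
      mul_pos hE0 hL]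
  nlinarith

/-- For every `k ≥ 1` and real `h ≥ 0`,
`f(N_k,h) > e^{−0.01h} ∫₁^{1.01} P_k(s) ds`. -/
theorem stmt_18 (k : ℕ) (hk : 1 ≤ k) (h : ℝ) (hh : 0 ≤ h) :
    Real.exp (-0.01 * h) * (∫ s in (1:ℝ)..1.01, Pk k s)
      < transSum (almostPrimes k) h := by
  have hS := aux_summable_int k hk
  have hI : ∫ s in (1:ℝ)..1.01, Pk k s
      = ∑' n : almostPrimes k, ∫ s in (1:ℝ)..1.01, (n.1 : ℝ) ^ (-s) := by
    have hle : (1:ℝ) ≤ 1.01 := by norm_num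
    simp only [intervalIntegral.integral_of_le hle] at hS ⊢
    unfold Pk
    rw [integral_tsum_of_summable_integral_norm]
    · intro n
      exact (intervalIntegrable_iff_integrableOn_Ioc_of_le hle).1
        (aux_intble _ (aux_two_le hk n.2) _ _)
    · convert hS using 5 with n s
      exact Real.norm_of_nonneg (by positivity)
  rw [hI, ← tsum_mul_left]
  have hmem : 2 ^ k ∈ almostPrimes k :=
    ⟨by positivity, by rw [Nat.Prime.primeFactorsList_pow Nat.prime_two]; simp⟩
  exact Summable.tsum_lt_tsum (i := ⟨2 ^ k, hmem⟩)
    (fun n => (aux_term n.1 (aux_two_le hk n.2) h hh).le)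
    (aux_term _ (aux_two_le hk hmem) h hh)
    (hS.mul_left _) (aux_summable_f k hk h hh)
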